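/- arXiv:2102.13193 — 2 statements merged into one kernel-verified Lean document; each statement's English description precedes it below -/
import Mathlib

section
/- Let G = K_n be the complete graph on n vertices, T a spanning tree of G, and c a tree-cycle of T of length k with vertices w_1, …, w_k. Let q_i = |closest-point-set(w_i, c)|. Then the number of transit tree-cycles having non-empty intersection with c equals Σ_{i<j} q_i q_j = (1/2) Σ_{i=1}^{k} q_i (n - k - q_i). -/
open SimpleGraph

/-- The set of edges lying on some path (in a tree: the unique path) between `x` and `y`
in the graph `T`. -/
def pathEdges {V : Type*} (T : SimpleGraph V) (x y : V) : Set (Sym2 V) :=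
  {f | ∃ p : T.Walk x y, p.IsPath ∧ f ∈ p.edges}

/-- The edge set of the tree-cycle induced (in the spanning tree `T`) by the cycle-edge `e`:
the edge `e` itself together with the edges of the (unique) path in `T` between
the endpoints of `e`. -/
def cycEdges {V : Type*} (T : SimpleGraph V) (e : Sym2 V) : Set (Sym2 V) :=
  insert e {f | ∃ x y, e = s(x, y) ∧ f ∈ pathEdges T x y}

/-- The vertex set of the tree-cycle induced (in the spanning tree `T`) by the
cycle-edge `e`. -/
def cycVerts {V : Type*} (T : SimpleGraph V) (e : Sym2 V) : Set V :=
  {v | ∃ x y, e = s(x, y) ∧ ∃ p : T.Walk x y, p.IsPath ∧ v ∈ p.support}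

/-- Two tree-cycles (induced by the cycle-edges `e` and `f`) have non-empty intersection:
some edge of `T` belongs to both of them. -/
def cyclesIntersect {V : Type*} (T : SimpleGraph V) (e f : Sym2 V) : Prop :=
  (cycEdges T e ∩ cycEdges T f ∩ T.edgeSet).Nonempty

/-- The cycle intersection number `∩_T(c)` of the tree-cycle `c` induced by the
cycle-edge `e`: the number of tree-cycles distinct from `c` whose intersection with `c`
is non-empty. -/
noncomputable def cycleInterNum {V : Type*} (G T : SimpleGraph V) (e : Sym2 V) : ℕ :=
  {f | f ∈ G.edgeSet \ T.edgeSet ∧ f ≠ e ∧ cyclesIntersect T e f}.ncard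

/-- The tree intersection number `∩_G(T)`: the number of unordered pairs of distinct
tree-cycles of `T` whose intersection is non-empty. -/
noncomputable def treeInterNum {V : Type*} (G T : SimpleGraph V) : ℕ :=
  {p : Sym2 (Sym2 V) | ∃ e f : Sym2 V, p = s(e, f) ∧ e ≠ f ∧
    e ∈ G.edgeSet \ T.edgeSet ∧ f ∈ G.edgeSet \ T.edgeSet ∧ cyclesIntersect T e f}.ncard

/-- `T` is a star spanning tree of `G` with center `v`. -/
def IsStarSpanningTree {V : Type*} (G T : SimpleGraph V) (v : V) : Prop :=
  T ≤ G ∧ T.IsTree ∧ ∀ u, u ≠ v → T.Adj v u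

/-- `closest-point-set(w, c)`: the set of vertices outside the tree-cycle `c` (induced by
the cycle-edge `e`) whose closest point on `c` (with respect to distance in `T`) is `w`. -/
def closestPointSet {V : Type*} (T : SimpleGraph V) (e : Sym2 V) (w : V) : Set V :=
  {v | v ∉ cycVerts T e ∧ ∀ u ∈ cycVerts T e, T.dist v w ≤ T.dist v u}

/-!
In a tree, every edge of the path from `x` to `y` lies on every walk from `x` to `y`. Let `C` be the
vertex set of a subtree and `a`, `b` points of `C` closest to `x`, `y`. A shortest walk from `x` to
`a` meets `C` only in `a`, so it has no edge inside `C`. Comparing the path from `x` to `y` with the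
detour through `a` and `b` shows that it has an edge inside `C` exactly when `a ≠ b`; the case
`x = y` gives uniqueness of the closest point. Hence the transit tree-cycles are the unordered pairs
of vertices outside `C` lying in different fibres of the closest-point map.
-/

section Fibers

open Finset

variable {α ι : Type*}

lemma card_sym2_filter_map_eq [DecidableEq ι] (S : Finset α) (g : α → ι) {i j : ι}
    (hij : i ≠ j) :
    #{f ∈ S.sym2 | f.map g = s(i, j)} = #{x ∈ S | g x = i} * #{x ∈ S | g x = j} := by
  rw [← card_product]
  symm
  refine card_nbij (fun p => s(p.1, p.2)) ?mapsTo ?injOn ?surjOn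
  case mapsTo =>
    rintro ⟨x, y⟩ hxy
    simp only [coe_product, coe_filter, Set.mem_prod, Set.mem_ofPred_eq] at hxy
    simp [hxy]
  case injOn =>
    rintro ⟨x, y⟩ hxy ⟨x', y'⟩ hxy' h
    simp only [coe_product, coe_filter, Set.mem_prod, Set.mem_ofPred_eq] at hxy hxy'
    rcases Sym2.eq_iff.1 h with ⟨rfl, rfl⟩ | ⟨rfl, rfl⟩
    · rfl
    · exact absurd (hxy.1.2.symm.trans hxy'.2.2) hij
  case surjOn =>
    intro f hf
    induction f with | _ x y
    simp only [coe_filter, Set.mem_ofPred_eq, mk_mem_sym2_iff, Sym2.map_mk] at hf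
    obtain ⟨⟨hx, hy⟩, h⟩ := hf
    rcases Sym2.eq_iff.1 h with ⟨hi, hj⟩ | ⟨hj, hi⟩
    · exact ⟨(x, y), by simp [hx, hy, hi, hj], rfl⟩
    · exact ⟨(y, x), by simp [hx, hy, hi, hj], Sym2.eq_swap⟩

lemma card_sym2_filter_map_not_isDiag [Fintype ι] [LinearOrder ι] (S : Finset α) (g : α → ι) :
    #{f ∈ S.sym2 | ¬ (f.map g).IsDiag} =
      ∑ i, ∑ j, if i < j then #{x ∈ S | g x = i} * #{x ∈ S | g x = j} else 0 := by
  calc #{f ∈ S.sym2 | ¬ (f.map g).IsDiag}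
      = ∑ z ∈ univ.sym2 with ¬ z.IsDiag, #{f ∈ S.sym2 | f.map g = z} := by
        rw [card_eq_sum_card_fiberwise (f := Sym2.map g) (t := {z ∈ univ.sym2 | ¬ z.IsDiag})
          (fun f hf => by simpa using (mem_filter.1 hf).2)]
        refine sum_congr rfl fun z hz => ?_
        rw [filter_filter]
        congr 1
        refine filter_congr fun f _ => and_iff_right_of_imp ?_
        rintro rfl
        exact (mem_filter.1 hz).2
    _ = ∑ p : ι × ι with p.1 < p.2, #{f ∈ S.sym2 | f.map g = s(p.1, p.2)} := by
        rw [sum_sym2_filter_not_isDiag]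
        refine sum_congr (Finset.ext fun p => ?_) fun _ _ => rfl
        simpa using ne_of_lt
    _ = ∑ p : ι × ι with p.1 < p.2, #{x ∈ S | g x = p.1} * #{x ∈ S | g x = p.2} :=
        sum_congr rfl fun p hp => card_sym2_filter_map_eq S g (mem_filter.1 hp).2.ne
    _ = _ := by rw [sum_filter, Fintype.sum_prod_type]

lemma two_mul_sum_sum_ite_lt {R : Type*} [CommRing R] [Fintype ι] [LinearOrder ι] (a : ι → R) :
    2 * ∑ i, ∑ j, (if i < j then a i * a j else 0) = ∑ i, a i * ((∑ j, a j) - a i) := by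
  have swap : ∑ i, ∑ j, (if i < j then a i * a j else 0) =
      ∑ i, ∑ j, if j < i then a i * a j else 0 := by
    rw [sum_comm]
    simp only [mul_comm]
  have trichotomy (i j : ι) : a i * a j = (if i < j then a i * a j else 0) +
      (if j < i then a i * a j else 0) + if i = j then a i * a j else 0 := by
    rcases lt_trichotomy i j with h | rfl | h
    · simp [h, h.not_gt, h.ne]
    · simp
    · simp [h, h.not_gt, h.ne']
  have square : ∑ i, a i * ∑ j, a j =
      2 * (∑ i, ∑ j, if i < j then a i * a j else 0) + ∑ i, a i * a i := by
    simp_rw [two_mul, mul_sum]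
    rw [sum_congr rfl fun i _ => sum_congr rfl fun j _ => trichotomy i j]
    simp only [sum_add_distrib, ← swap, sum_ite_eq, mem_univ, if_true]
  simp only [mul_sub, sum_sub_distrib]
  rw [square, add_sub_cancel_right]

end Fibers

section Subtree

variable {V ι : Type*} {T : SimpleGraph V} {C : Set V}

lemma eq_of_isPath (hT : T.IsAcyclic) {x y : V} {p q : T.Walk x y} (hp : p.IsPath)
    (hq : q.IsPath) : p = q :=
  congrArg Subtype.val ((hT.subsingleton_path x y).elim ⟨p, hp⟩ ⟨q, hq⟩)

lemma edges_subset_of_isPath (hT : T.IsAcyclic) {x y : V} {p : T.Walk x y} (hp : p.IsPath)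
    (q : T.Walk x y) : p.edges ⊆ q.edges := by
  classical
  rw [eq_of_isPath hT hp q.bypass_isPath]
  exact q.edges_bypass_subset_edges

lemma exists_walk_edges_mem_sym2 (hC : (T.induce C).Preconnected) {a b : V} (ha : a ∈ C)
    (hb : b ∈ C) : ∃ r : T.Walk a b, ∀ g ∈ r.edges, g ∈ C.sym2 := by
  obtain ⟨r⟩ := hC ⟨a, ha⟩ ⟨b, hb⟩
  refine ⟨r.map (Embedding.induce C).toHom, fun g hg => ?_⟩
  obtain ⟨⟨u, v⟩, -, rfl⟩ := List.mem_map.1 (Walk.edges_map _ r ▸ hg)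
  exact ⟨u.2, v.2⟩

/-- `closest-point(v, c) = w`, for an arbitrary set `C` in place of the vertex set of `c`. It is a
relation because existence and uniqueness of `w` depend on `T` and `C`. -/
def IsClosestPoint (T : SimpleGraph V) (C : Set V) (v w : V) : Prop :=
  w ∈ C ∧ ∀ u ∈ C, T.dist v w ≤ T.dist v u

namespace IsClosestPoint

lemma exists_of_nonempty (T : SimpleGraph V) (hC : C.Nonempty) (v : V) :
    ∃ w, IsClosestPoint T C v w := by
  obtain ⟨w, hw, hmin⟩ := (measure (T.dist v)).wf.has_min C hC
  exact ⟨w, hw, fun u hu => not_lt.1 (hmin u hu)⟩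

lemma eq_of_mem_support {v w u : V} (hw : IsClosestPoint T C v w) {p : T.Walk v w}
    (hp : p.length = T.dist v w) (hup : u ∈ p.support) (hu : u ∈ C) : u = w := by
  classical
  by_contra huw
  have := p.length_takeUntil_lt_length hup huw
  have := dist_le (p.takeUntil u hup)
  have := hw.2 u hu
  omega

lemma notMem_sym2_of_mem_edges {v w : V} (hw : IsClosestPoint T C v w) {p : T.Walk v w}
    (hp : p.length = T.dist v w) {g : Sym2 V} (hg : g ∈ p.edges) : g ∉ C.sym2 := by
  induction g with | _ u u'
  rintro ⟨hu, hu'⟩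
  refine (p.adj_of_mem_edges hg).ne ?_
  rw [hw.eq_of_mem_support hp (p.fst_mem_support_of_mem_edges hg) hu,
    hw.eq_of_mem_support hp (p.snd_mem_support_of_mem_edges hg) hu']

lemma exists_mem_edges_mem_sym2_iff (hT : T.IsTree) (hC : (T.induce C).Preconnected)
    {x y a b : V} (ha : IsClosestPoint T C x a) (hb : IsClosestPoint T C y b) {p : T.Walk x y}
    (hp : p.IsPath) : (∃ g ∈ p.edges, g ∈ C.sym2) ↔ a ≠ b := by
  obtain ⟨s, hs⟩ := hT.connected.exists_walk_length_eq_dist x a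
  obtain ⟨t, ht⟩ := hT.connected.exists_walk_length_eq_dist y b
  constructor
  · rintro ⟨g, hgp, hgC⟩ rfl
    have hg := edges_subset_of_isPath hT.isAcyclic hp (s.append t.reverse) hgp
    simp only [Walk.edges_append, Walk.edges_reverse, List.mem_append, List.mem_reverse] at hg
    exact hg.elim (ha.notMem_sym2_of_mem_edges hs · hgC) (hb.notMem_sym2_of_mem_edges ht · hgC)
  · intro hab
    classical
    obtain ⟨r, hr⟩ := exists_walk_edges_mem_sym2 hC ha.1 hb.1
    obtain ⟨g, hg⟩ : ∃ g, g ∈ r.bypass.edges :=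
      List.exists_mem_of_ne_nil _ fun h => hab (Walk.edges_eq_nil.1 h).eq
    have hgC := hr g (r.edges_bypass_subset_edges hg)
    have hg' := edges_subset_of_isPath hT.isAcyclic r.bypass_isPath
      (s.reverse.append (p.append t)) hg
    simp only [Walk.edges_append, Walk.edges_reverse, List.mem_append, List.mem_reverse] at hg'
    rcases hg' with hgs | hgp | hgt
    · exact absurd hgC (ha.notMem_sym2_of_mem_edges hs hgs)
    · exact ⟨g, hgp, hgC⟩
    · exact absurd hgC (hb.notMem_sym2_of_mem_edges ht hgt)

lemma unique (hT : T.IsTree) (hC : (T.induce C).Preconnected) {v a b : V}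
    (ha : IsClosestPoint T C v a) (hb : IsClosestPoint T C v b) : a = b := by
  by_contra hab
  simpa using (exists_mem_edges_mem_sym2_iff hT hC ha hb Walk.IsPath.nil).2 hab

lemma exists_index_iff (hT : T.IsTree) (hC : (T.induce C).Connected) {w : ι → V}
    (hw : Set.BijOn w Set.univ C) : ∃ g : V → ι, ∀ v i, IsClosestPoint T C v (w i) ↔ g v = i := by
  have hex (v : V) : ∃ i, IsClosestPoint T C v (w i) := by
    obtain ⟨u, hu⟩ := exists_of_nonempty T (Set.nonempty_coe_sort.1 hC.nonempty) v
    obtain ⟨i, -, rfl⟩ := hw.surjOn hu.1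
    exact ⟨i, hu⟩
  choose g hg using hex
  refine ⟨g, fun v i => ⟨fun h => ?_, fun h => h ▸ hg v⟩⟩
  exact Set.injOn_univ.1 hw.injOn (unique hT hC.preconnected (hg v) h)

end IsClosestPoint

lemma cycEdges_inter_edgeSet (hT : T.IsAcyclic) {x y : V} {p : T.Walk x y} (hp : p.IsPath) :
    cycEdges T s(x, y) ∩ T.edgeSet = p.edgeSet := by
  ext g
  constructor
  · rintro ⟨rfl | ⟨x', y', hxy, r, hr, hgr⟩, hgT⟩
    · exact isBridge_iff_forall_walk_mem_edges.1 (isAcyclic_iff_forall_isBridge.1 hT hgT) p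
    · rcases Sym2.eq_iff.1 hxy with ⟨rfl, rfl⟩ | ⟨rfl, rfl⟩
      · exact edges_subset_of_isPath hT hr p hgr
      · simpa using edges_subset_of_isPath hT hr p.reverse hgr
  · exact fun hg => ⟨Or.inr ⟨x, y, rfl, p, hp, hg⟩, p.edges_subset_edgeSet hg⟩

lemma cycVerts_eq_support (hT : T.IsAcyclic) {x y : V} {p : T.Walk x y} (hp : p.IsPath) :
    cycVerts T s(x, y) = {v | v ∈ p.support} := by
  ext v
  constructor
  · rintro ⟨x', y', hxy, r, hr, hv⟩
    rcases Sym2.eq_iff.1 hxy with ⟨rfl, rfl⟩ | ⟨rfl, rfl⟩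
    · exact eq_of_isPath hT hr hp ▸ hv
    · simpa [eq_of_isPath hT hr hp.reverse] using hv
  · exact fun hv => ⟨x, y, rfl, p, hp, hv⟩

lemma connected_induce_cycVerts (hT : T.IsTree) (e : Sym2 V) :
    (T.induce (cycVerts T e)).Connected := by
  induction e with | _ x y
  obtain ⟨p, hp⟩ := hT.connected.exists_isPath x y
  rw [cycVerts_eq_support hT.isAcyclic hp]
  exact p.connected_induce_support

lemma mem_cycVerts_of_mem (hT : T.Connected) {e : Sym2 V} {x : V} (hx : x ∈ e) :
    x ∈ cycVerts T e := by
  obtain ⟨y, rfl⟩ := hx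
  obtain ⟨p, hp⟩ := hT.exists_isPath x y
  exact ⟨x, y, rfl, p, hp, p.start_mem_support⟩

lemma cycEdges_inter_edgeSet_eq_sym2_inter (hT : T.IsTree) (e : Sym2 V) :
    cycEdges T e ∩ T.edgeSet = (cycVerts T e).sym2 ∩ T.edgeSet := by
  classical
  induction e with | _ x y
  obtain ⟨p, hp⟩ := hT.connected.exists_isPath x y
  rw [cycEdges_inter_edgeSet hT.isAcyclic hp, cycVerts_eq_support hT.isAcyclic hp]
  ext ⟨u, v⟩
  constructor
  · exact fun h => ⟨⟨p.fst_mem_support_of_mem_edges h, p.snd_mem_support_of_mem_edges h⟩,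
      p.edges_subset_edgeSet h⟩
  · rintro ⟨⟨hu, hv⟩, huv⟩
    have hbridge := isAcyclic_iff_forall_isBridge.1 hT.isAcyclic huv
    have h := isBridge_iff_forall_walk_mem_edges.1 hbridge
      ((p.takeUntil u hu).reverse.append (p.takeUntil v hv))
    simp only [Walk.edges_append, Walk.edges_reverse, List.mem_append, List.mem_reverse] at h
    exact h.elim (p.edges_takeUntil_subset_edges hu ·) (p.edges_takeUntil_subset_edges hv ·)

lemma closestPointSet_eq {e : Sym2 V} {w : V} (hw : w ∈ cycVerts T e) :
    closestPointSet T e w = {v | v ∉ cycVerts T e ∧ IsClosestPoint T (cycVerts T e) v w} :=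
  Set.ext fun _ => and_congr_right' (and_iff_right hw).symm

/-- The pairs of vertices outside `C` whose path in `T` uses an edge inside `C`. If `C` is the
vertex set of a tree-cycle `c`, these are the cycle-edges of `K_n` inducing the transit tree-cycles
that meet `c`, see `setOf_transit_eq`. -/
def transitPairs (T : SimpleGraph V) (C : Set V) : Set (Sym2 V) :=
  {f ∈ Cᶜ.sym2 | (cycEdges T f ∩ T.edgeSet ∩ C.sym2).Nonempty}

lemma mem_transitPairs_iff (hT : T.IsTree) (hC : (T.induce C).Preconnected) {x y a b : V}
    (ha : IsClosestPoint T C x a) (hb : IsClosestPoint T C y b) :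
    s(x, y) ∈ transitPairs T C ↔ (x ∉ C ∧ y ∉ C) ∧ a ≠ b := by
  obtain ⟨p, hp⟩ := hT.connected.exists_isPath x y
  rw [← IsClosestPoint.exists_mem_edges_mem_sym2_iff hT hC ha hb hp]
  unfold transitPairs
  rw [Set.mem_ofPred_eq, cycEdges_inter_edgeSet hT.isAcyclic hp]
  rfl

lemma transitPairs_subset_edgeSet_sdiff (hT : T.IsAcyclic) :
    transitPairs T C ⊆ (⊤ : SimpleGraph V).edgeSet \ T.edgeSet := by
  rintro ⟨x, y⟩ ⟨hf, g, hg, hgC⟩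
  constructor
  · rintro (rfl : x = y)
    rw [cycEdges_inter_edgeSet hT Walk.IsPath.nil] at hg
    simp at hg
  · intro hxy
    rw [cycEdges_inter_edgeSet hT (Walk.IsPath.of_adj hxy)] at hg
    obtain rfl : g = s(x, y) := List.mem_singleton.1 hg
    exact hf.1 hgC.1

lemma setOf_transit_eq (hT : T.IsTree) (e : Sym2 V) :
    {f | f ∈ (⊤ : SimpleGraph V).edgeSet \ T.edgeSet ∧ f ≠ e ∧ cyclesIntersect T e f ∧
      ∀ x ∈ f, x ∉ cycVerts T e} = transitPairs T (cycVerts T e) := by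
  have intersect_iff (f : Sym2 V) : cyclesIntersect T e f ↔
      (cycEdges T f ∩ T.edgeSet ∩ (cycVerts T e).sym2).Nonempty := by
    rw [cyclesIntersect, Set.inter_right_comm, cycEdges_inter_edgeSet_eq_sym2_inter hT,
      Set.inter_assoc, Set.inter_comm, Set.inter_comm T.edgeSet]
  ext f
  simp only [intersect_iff]
  constructor
  · rintro ⟨-, -, hne, hf⟩
    exact ⟨Set.mem_sym2_iff_subset.2 hf, hne⟩
  · intro hf
    have hout : ∀ x ∈ f, x ∉ cycVerts T e := Set.mem_sym2_iff_subset.1 hf.1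
    refine ⟨transitPairs_subset_edgeSet_sdiff hT.isAcyclic hf, ?_, hf.2, hout⟩
    rintro rfl
    exact hout _ f.out_fst_mem (mem_cycVerts_of_mem hT.connected f.out_fst_mem)

theorem ncard_transitPairs [Finite V] [Fintype ι] [LinearOrder ι] (hT : T.IsTree)
    (hC : (T.induce C).Connected) {w : ι → V} (hw : Set.BijOn w Set.univ C) :
    (transitPairs T C).ncard = ∑ i, ∑ j, if i < j then
      {v | v ∉ C ∧ IsClosestPoint T C v (w i)}.ncard *
        {v | v ∉ C ∧ IsClosestPoint T C v (w j)}.ncard else 0 := by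
  classical
  have := Fintype.ofFinite V
  obtain ⟨g, hg⟩ := IsClosestPoint.exists_index_iff hT hC hw
  have hpairs : transitPairs T C =
      ↑(Cᶜ.toFinset.sym2.filter fun f => ¬ (f.map g).IsDiag) := by
    ext ⟨x, y⟩
    rw [mem_transitPairs_iff hT hC.preconnected ((hg x _).2 rfl) ((hg y _).2 rfl),
      (Set.injOn_univ.1 hw.injOn).ne_iff]
    simp
  have hfiber (i : ι) : {v | v ∉ C ∧ IsClosestPoint T C v (w i)} =
      ↑(Cᶜ.toFinset.filter fun v => g v = i) := by
    ext v
    simp [hg]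
  simp only [hpairs, hfiber, Set.ncard_coe_finset]
  exact card_sym2_filter_map_not_isDiag _ g

theorem sum_ncard_isClosestPoint [Finite V] [Fintype ι] (hT : T.IsTree)
    (hC : (T.induce C).Connected) {w : ι → V} (hw : Set.BijOn w Set.univ C) :
    ∑ i, {v | v ∉ C ∧ IsClosestPoint T C v (w i)}.ncard = Cᶜ.ncard := by
  classical
  have := Fintype.ofFinite V
  obtain ⟨g, hg⟩ := IsClosestPoint.exists_index_iff hT hC hw
  rw [Set.ncard_eq_toFinset_card',
    Finset.card_eq_sum_card_fiberwise (f := g) (t := Finset.univ) (fun _ _ => Finset.mem_univ _)]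
  refine Finset.sum_congr rfl fun i _ => ?_
  rw [Set.ncard_eq_toFinset_card']
  congr 1
  ext v
  simp [hg]

/-- The vertex set of the tree-cycle may be replaced by that of any subtree of `T`. -/
theorem stmt_3_general [Fintype V] [Fintype ι] [LinearOrder ι] (hT : T.IsTree)
    (hC : (T.induce C).Connected) {w : ι → V} (hw : Set.BijOn w Set.univ C)
    {q : ι → ℕ} (hq : ∀ i, q i = {v | v ∉ C ∧ IsClosestPoint T C v (w i)}.ncard) :
    ((transitPairs T C).ncard : ℚ) =
        ∑ i, ∑ j, (if i < j then (q i : ℚ) * (q j : ℚ) else 0) ∧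
      ∑ i, ∑ j, (if i < j then (q i : ℚ) * (q j : ℚ) else 0) =
        (1 / 2) * ∑ i, (q i : ℚ) * ((Fintype.card V : ℚ) - (C.ncard : ℚ) - (q i : ℚ)) := by
  obtain rfl : q = _ := funext hq
  have hsum : (Fintype.card V : ℚ) - C.ncard =
      ∑ i, ({v | v ∉ C ∧ IsClosestPoint T C v (w i)}.ncard : ℚ) := by
    rw [← Nat.cast_sum, sum_ncard_isClosestPoint hT hC hw, sub_eq_iff_eq_add',
      ← Nat.card_eq_fintype_card, ← Set.ncard_add_ncard_compl C, Nat.cast_add]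
  refine ⟨by rw [ncard_transitPairs hT hC hw]; push_cast; rfl, ?_⟩
  rw [hsum, ← two_mul_sum_sum_ite_lt]
  ring

end Subtree

/-- In the complete graph `K_n`, for a spanning tree `T` and a tree-cycle
`c` of length `k` with vertices `w 1, …, w k` and `q i = |closest-point-set(w i, c)|`,
the number of transit tree-cycles (no endpoint of the inducing cycle-edge on `c`) having
non-empty intersection with `c` equals `Σ_{i<j} q i * q j = (1/2) Σ_i q i * (n - k - q i)`. -/
theorem stmt_3 {V : Type*} [Fintype V] (n : ℕ) (hn : Fintype.card V = n)
    (T : SimpleGraph V) (hle : T ≤ (⊤ : SimpleGraph V)) (hT : T.IsTree)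
    (e : Sym2 V) (he : e ∈ (⊤ : SimpleGraph V).edgeSet \ T.edgeSet)
    (k : ℕ) (hk : (cycVerts T e).ncard = k)
    (w : Fin k → V) (hw : Set.BijOn w Set.univ (cycVerts T e))
    (q : Fin k → ℕ) (hq : ∀ i, q i = (closestPointSet T e (w i)).ncard) :
    (({f | f ∈ (⊤ : SimpleGraph V).edgeSet \ T.edgeSet ∧ f ≠ e ∧ cyclesIntersect T e f ∧
        ∀ x ∈ f, x ∉ cycVerts T e} : Set (Sym2 V)).ncard : ℚ)
      = ∑ i : Fin k, ∑ j : Fin k, (if i < j then (q i : ℚ) * (q j : ℚ) else 0) ∧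
    (∑ i : Fin k, ∑ j : Fin k, (if i < j then (q i : ℚ) * (q j : ℚ) else 0))
      = (1 / 2) * ∑ i : Fin k, (q i : ℚ) * ((n : ℚ) - (k : ℚ) - (q i : ℚ)) := by
  subst hn hk
  rw [setOf_transit_eq hT e]
  refine stmt_3_general hT (connected_induce_cycVerts hT e) hw fun i => ?_
  rw [hq, closestPointSet_eq (hw.mapsTo (Set.mem_univ i))]
end

section
/- Let G = K_n be the complete graph on n vertices and let c be a cycle of G. Remove exactly one edge e of c, choose a vertex v of c, and let T be the spanning tree consisting of the edges of c - e together with a star centered at v on the vertices not in c. Then T is a spanning tree of G having c as a tree-cycle, and ∩_T(c) ≤ ∩_{T'}(c) for every spanning tree T' of G having c as a tree-cycle. -/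
open SimpleGraph

/-!
Deleting from a spanning tree `T'` of `K_n` the edges of a tree-cycle `c` leaves a forest in which
distinct vertices of `c` lie in distinct components. An edge of `K_n` joins two components exactly
when it lies on `c` or induces a tree-cycle meeting `c`, so `∩_T'(c) + |c|` counts the edges between
components. This count is smallest when all vertices outside `c` hang from a single vertex `v`: an
edge `s(x, u)` inside a component of `T' - c`, with `x ≠ v` on `c` and `u` off `c`, is traded for
the edge `s(v, u)` between two components, and `u` determines `x`.
-/

section PathEdges

variable {V : Type*} {T : SimpleGraph V} {x y : V}

lemma pathEdges_comm (T : SimpleGraph V) (x y : V) : pathEdges T x y = pathEdges T y x := by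
  suffices h : ∀ x y, pathEdges T x y ⊆ pathEdges T y x from (h x y).antisymm (h y x)
  rintro x y f ⟨p, hp, hf⟩
  exact ⟨p.reverse, hp.reverse, by simpa using hf⟩

lemma pathEdges_subset_edgeSet (T : SimpleGraph V) (x y : V) : pathEdges T x y ⊆ T.edgeSet :=
  fun _ ⟨p, _, hf⟩ ↦ p.edges_subset_edgeSet hf

lemma mk_mem_pathEdges_of_adj (h : T.Adj x y) : s(x, y) ∈ pathEdges T x y :=
  ⟨h.toWalk, h.isPath_toWalk, by simp⟩

lemma pathEdges_nonempty (h : T.Reachable x y) (hxy : x ≠ y) : (pathEdges T x y).Nonempty := by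
  obtain ⟨p, hp⟩ := h.exists_isPath
  obtain ⟨f, hf⟩ := List.exists_mem_of_ne_nil p.edges
    (mt Walk.edges_eq_nil.1 (Walk.not_nil_of_ne hxy))
  exact ⟨f, p, hp, hf⟩

lemma pathEdges_eq_of_isAcyclic (hT : T.IsAcyclic) {p : T.Walk x y} (hp : p.IsPath) :
    pathEdges T x y = {f | f ∈ p.edges} := by
  ext f
  refine ⟨fun ⟨r, hr, hf⟩ ↦ ?_, fun hf ↦ ⟨p, hp, hf⟩⟩
  have hrp : r = p := congrArg Subtype.val
    ((hT.subsingleton_path x y).elim ⟨r, hr⟩ ⟨p, hp⟩)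
  exact hrp ▸ hf

lemma not_reachable_deleteEdges_iff_pathEdges_inter_nonempty (hT : T.IsTree) (P : Set (Sym2 V)) :
    ¬ (T.deleteEdges P).Reachable x y ↔ (pathEdges T x y ∩ P).Nonempty := by
  constructor
  · intro hsep
    obtain ⟨p, hp⟩ := hT.connected.exists_isPath x y
    obtain ⟨f, hfP, hfp⟩ := p.exists_mem_edges_of_not_reachable_deleteEdges hsep
    exact ⟨f, ⟨p, hp, hfp⟩, hfP⟩
  · rintro ⟨f, hf, hfP⟩ hreach
    obtain ⟨r, hr⟩ := hreach.exists_isPath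
    rw [pathEdges_eq_of_isAcyclic hT.isAcyclic (hr.mapLe (T.deleteEdges_le P)),
      Set.mem_ofPred_eq, Walk.edges_mapLe_eq_edges] at hf
    have hfr := r.edges_subset_edgeSet hf
    rw [edgeSet_deleteEdges] at hfr
    exact hfr.2 hfP

end PathEdges

section TreeCycle

variable {V : Type*} {T : SimpleGraph V} {e : Sym2 V} {x y v w : V}

lemma cycEdges_mk (T : SimpleGraph V) (x y : V) :
    cycEdges T s(x, y) = insert s(x, y) (pathEdges T x y) := by
  refine congrArg (insert s(x, y)) (Set.ext fun f ↦ ⟨?_, fun hf ↦ ⟨x, y, rfl, hf⟩⟩)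
  rintro ⟨x', y', h, hf⟩
  rcases Sym2.eq_iff.1 h with ⟨rfl, rfl⟩ | ⟨rfl, rfl⟩
  · exact hf
  · rwa [pathEdges_comm]

lemma mem_cycVerts_mk_iff :
    w ∈ cycVerts T s(x, y) ↔ ∃ p : T.Walk x y, p.IsPath ∧ w ∈ p.support := by
  refine ⟨?_, fun h ↦ ⟨x, y, rfl, h⟩⟩
  rintro ⟨x', y', h, p, hp, hw⟩
  rcases Sym2.eq_iff.1 h with ⟨rfl, rfl⟩ | ⟨rfl, rfl⟩
  · exact ⟨p, hp, hw⟩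
  · exact ⟨p.reverse, hp.reverse, by simpa using hw⟩

lemma mem_cycVerts_iff_exists_mem_cycEdges (hT : T.Connected) :
    w ∈ cycVerts T e ↔ ∃ f ∈ cycEdges T e, w ∈ f := by
  induction e with
  | _ x y =>
  rw [mem_cycVerts_mk_iff, cycEdges_mk]
  constructor
  · rintro ⟨p, hp, hw⟩
    rcases Walk.mem_support_iff_exists_mem_edges.1 hw with rfl | ⟨f, hf, hwf⟩
    · exact ⟨_, Set.mem_insert _ _, Sym2.mem_mk_right x w⟩
    · exact ⟨f, Set.mem_insert_of_mem _ ⟨p, hp, hf⟩, hwf⟩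
  · rintro ⟨f, rfl | ⟨p, hp, hf⟩, hwf⟩
    · obtain ⟨p, hp⟩ := hT.exists_isPath x y
      rcases Sym2.mem_iff.1 hwf with rfl | rfl
      · exact ⟨p, hp, p.start_mem_support⟩
      · exact ⟨p, hp, p.end_mem_support⟩
    · exact ⟨p, hp, Walk.mem_support_iff_exists_mem_edges.2 (Or.inr ⟨f, hf, hwf⟩)⟩

lemma cycVerts_eq_of_cycEdges_eq {T' : SimpleGraph V} {f : Sym2 V} (hT : T.Connected)
    (hT' : T'.Connected) (h : cycEdges T e = cycEdges T' f) : cycVerts T e = cycVerts T' f := by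
  ext w
  rw [mem_cycVerts_iff_exists_mem_cycEdges hT, mem_cycVerts_iff_exists_mem_cycEdges hT', h]

lemma deleteEdges_cycEdges_adj_of_notMem_cycVerts (hT : T.Connected) (h : T.Adj v w)
    (hw : w ∉ cycVerts T e) : (T.deleteEdges (cycEdges T e)).Adj v w := by
  refine deleteEdges_adj.2 ⟨h, fun hmem ↦ hw ?_⟩
  exact (mem_cycVerts_iff_exists_mem_cycEdges hT).2 ⟨_, hmem, Sym2.mem_mk_right v w⟩

lemma exists_isPath_edges_subset_cycEdges (hv : v ∈ cycVerts T e) (hw : w ∈ cycVerts T e) :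
    ∃ r : T.Walk v w, r.IsPath ∧ ∀ f ∈ r.edges, f ∈ cycEdges T e := by
  classical
  induction e with
  | _ x y =>
  obtain ⟨p, hp, hvp⟩ := mem_cycVerts_mk_iff.1 hv
  obtain ⟨q, hq, hwq⟩ := mem_cycVerts_mk_iff.1 hw
  let r := (p.takeUntil v hvp).reverse.append (q.takeUntil w hwq)
  refine ⟨r.bypass, r.bypass_isPath, fun f hf ↦ ?_⟩
  have hfr : f ∈ r.edges := r.edges_bypass_subset_edges hf
  rw [cycEdges_mk]
  rw [Walk.edges_append, Walk.edges_reverse, List.mem_append, List.mem_reverse] at hfr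
  rcases hfr with hfp | hfq
  · exact Or.inr ⟨p, hp, p.edges_takeUntil_subset_edges hvp hfp⟩
  · exact Or.inr ⟨q, hq, q.edges_takeUntil_subset_edges hwq hfq⟩

lemma injOn_connectedComponentMk_cycVerts (hT : T.IsTree) (e : Sym2 V) :
    (cycVerts T e).InjOn (T.deleteEdges (cycEdges T e)).connectedComponentMk := by
  intro v hv w hw hvw
  by_contra hne
  obtain ⟨r, hr, hre⟩ := exists_isPath_edges_subset_cycEdges hv hw
  obtain ⟨f, hf⟩ := pathEdges_nonempty r.reachable hne
  have hfr : f ∈ r.edges := by rwa [pathEdges_eq_of_isAcyclic hT.isAcyclic hr] at hf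
  exact (not_reachable_deleteEdges_iff_pathEdges_inter_nonempty hT _).2 ⟨f, hf, hre f hfr⟩
    (ConnectedComponent.exact hvw)

lemma cyclesIntersect_mk_iff (hxy : s(x, y) ∉ T.edgeSet) :
    cyclesIntersect T e s(x, y) ↔ (pathEdges T x y ∩ cycEdges T e).Nonempty := by
  rw [cyclesIntersect, cycEdges_mk, Set.inter_assoc, Set.insert_inter_of_notMem hxy,
    Set.inter_eq_left.2 (pathEdges_subset_edgeSet T x y), Set.inter_comm]

end TreeCycle

section CrossEdges

variable {V : Type*} {G F F' T : SimpleGraph V} {e : Sym2 V} {x y v : V}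

/-- The edges of `G` whose endpoints lie in different connected components of `F`. For `F` a
spanning tree minus a tree-cycle `c`, these are the edges of `c` and the cycle-edges whose
tree-cycles meet `c`. -/
def crossEdges (G F : SimpleGraph V) : Set (Sym2 V) :=
  {f ∈ G.edgeSet | ¬ (f.map F.connectedComponentMk).IsDiag}

lemma mk_mem_crossEdges_iff : s(x, y) ∈ crossEdges G F ↔ G.Adj x y ∧ ¬ F.Reachable x y := by
  simp [crossEdges]

lemma mk_mem_crossEdges_top_iff : s(x, y) ∈ crossEdges ⊤ F ↔ ¬ F.Reachable x y := by
  rw [mk_mem_crossEdges_iff, top_adj, and_iff_right_iff_imp]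
  exact fun h hxy ↦ h (hxy ▸ Reachable.refl x)

lemma cycEdges_subset_crossEdges (hT : T.IsTree) (hTG : T ≤ G) (he : e ∈ G.edgeSet) :
    cycEdges T e ⊆ crossEdges G (T.deleteEdges (cycEdges T e)) := by
  intro f hf
  induction f with
  | _ x y =>
  rw [mk_mem_crossEdges_iff, not_reachable_deleteEdges_iff_pathEdges_inter_nonempty hT]
  rcases id hf with rfl | ⟨_, _, -, hpath⟩
  · have hadj : G.Adj x y := he
    obtain ⟨f, hf⟩ := pathEdges_nonempty (hT.connected x y) hadj.ne
    exact ⟨hadj, f, hf, Or.inr ⟨x, y, rfl, hf⟩⟩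
  · have hadj : T.Adj x y := pathEdges_subset_edgeSet _ _ _ hpath
    exact ⟨hTG hadj, s(x, y), mk_mem_pathEdges_of_adj hadj, hf⟩

lemma crossEdges_sdiff_cycEdges (hT : T.IsTree) (e : Sym2 V) :
    crossEdges G (T.deleteEdges (cycEdges T e)) \ cycEdges T e =
      {f | f ∈ G.edgeSet \ T.edgeSet ∧ f ≠ e ∧ cyclesIntersect T e f} := by
  ext f
  induction f with
  | _ z w =>
  rw [Set.mem_sdiff, mk_mem_crossEdges_iff,
    not_reachable_deleteEdges_iff_pathEdges_inter_nonempty hT]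
  constructor
  · rintro ⟨⟨hG, hmeet⟩, hc⟩
    have hzwT : s(z, w) ∉ T.edgeSet := fun h ↦
      (not_reachable_deleteEdges_iff_pathEdges_inter_nonempty hT _).2 hmeet
        (deleteEdges_adj.2 ⟨h, hc⟩).reachable
    exact ⟨⟨hG, hzwT⟩, fun h ↦ hc (h ▸ Set.mem_insert _ _), (cyclesIntersect_mk_iff hzwT).2 hmeet⟩
  · rintro ⟨⟨hG, hzwT⟩, hne, hmeet⟩
    refine ⟨⟨hG, (cyclesIntersect_mk_iff hzwT).1 hmeet⟩, ?_⟩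
    rintro (h | ⟨_, _, -, hpath⟩)
    · exact hne h
    · exact hzwT (pathEdges_subset_edgeSet _ _ _ hpath)

lemma cycleInterNum_add_ncard_cycEdges [Finite V] (hT : T.IsTree) (hTG : T ≤ G)
    (he : e ∈ G.edgeSet) :
    cycleInterNum G T e + (cycEdges T e).ncard =
      (crossEdges G (T.deleteEdges (cycEdges T e))).ncard := by
  rw [cycleInterNum, ← crossEdges_sdiff_cycEdges hT,
    Set.ncard_sdiff_add_ncard_of_subset (cycEdges_subset_crossEdges hT hTG he)]

lemma exists_eq_mk_of_mem_crossEdges_sdiff {C : Set V}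
    (hF : ∀ u ∉ C, F.Reachable v u) (hF' : C.InjOn F'.connectedComponentMk)
    (he : e ∈ crossEdges ⊤ F \ crossEdges ⊤ F') :
    ∃ u ∉ C, ∃ x ∈ C, x ≠ v ∧ F'.Reachable x u ∧ e = s(x, u) := by
  induction e with
  | _ x u =>
  rw [Set.mem_sdiff, mk_mem_crossEdges_top_iff, mk_mem_crossEdges_top_iff, not_not] at he
  obtain ⟨hsep, hreach⟩ := he
  by_cases hx : x ∈ C <;> by_cases hu : u ∈ C
  · exact absurd (hF' hx hu (ConnectedComponent.sound hreach) ▸ Reachable.refl x) hsep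
  · exact ⟨u, hu, x, hx, fun h ↦ hsep (h ▸ hF u hu), hreach, rfl⟩
  · exact ⟨x, hx, u, hu, fun h ↦ hsep (h ▸ (hF x hx).symm), hreach.symm, Sym2.eq_swap⟩
  · exact absurd ((hF x hx).symm.trans (hF u hu)) hsep

lemma ncard_crossEdges_top_le [Finite V] {C : Set V} (hv : v ∈ C)
    (hF : ∀ u ∉ C, F.Reachable v u) (hF' : C.InjOn F'.connectedComponentMk) :
    (crossEdges ⊤ F).ncard ≤ (crossEdges ⊤ F').ncard := by
  rw [Set.ncard_le_ncard_iff_ncard_sdiff_le_ncard_sdiff]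
  let U : Set V := {u | u ∉ C ∧ ∃ x ∈ C, x ≠ v ∧ F'.Reachable x u}
  have : Nonempty V := ⟨v⟩
  choose! root hrootC hroot_ne hroot using fun u (hu : u ∈ U) ↦ hu.2
  have hsub : crossEdges ⊤ F \ crossEdges ⊤ F' ⊆ (fun u ↦ s(root u, u)) '' U := by
    intro e he
    obtain ⟨u, hu, x, hx, hxv, hxu, rfl⟩ := exists_eq_mk_of_mem_crossEdges_sdiff hF hF' he
    have huU : u ∈ U := ⟨hu, x, hx, hxv, hxu⟩
    have hrootx : root u = x := hF' (hrootC u huU) hx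
      (ConnectedComponent.sound ((hroot u huU).trans hxu.symm))
    exact ⟨u, huU, by simp only [hrootx]⟩
  have hsup : (fun u ↦ s(v, u)) '' U ⊆ crossEdges ⊤ F' \ crossEdges ⊤ F := by
    rintro _ ⟨u, huU, rfl⟩
    rw [Set.mem_sdiff, mk_mem_crossEdges_top_iff, mk_mem_crossEdges_top_iff, not_not]
    refine ⟨fun hvu ↦ hroot_ne u huU ?_, hF u huU.1⟩
    exact hF' (hrootC u huU) hv (ConnectedComponent.sound ((hroot u huU).trans hvu.symm))
  calc (crossEdges ⊤ F \ crossEdges ⊤ F').ncard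
      ≤ ((fun u ↦ s(root u, u)) '' U).ncard := Set.ncard_le_ncard hsub
    _ ≤ U.ncard := Set.ncard_image_le
    _ = ((fun u ↦ s(v, u)) '' U).ncard :=
      (Set.ncard_image_of_injective U fun _ _ h ↦ Sym2.congr_right.1 h).symm
    _ ≤ (crossEdges ⊤ F' \ crossEdges ⊤ F).ncard := Set.ncard_le_ncard hsup

theorem cycleInterNum_top_le_of_cycEdges_eq [Finite V] {T' : SimpleGraph V} {f : Sym2 V}
    (hT : T.IsTree) (hT' : T'.IsTree) (he : ¬ e.IsDiag) (hf : ¬ f.IsDiag)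
    (hcyc : cycEdges T e = cycEdges T' f) (hv : v ∈ cycVerts T e)
    (hreach : ∀ u ∉ cycVerts T e, (T.deleteEdges (cycEdges T e)).Reachable v u) :
    cycleInterNum ⊤ T e ≤ cycleInterNum ⊤ T' f := by
  have hinj := injOn_connectedComponentMk_cycVerts hT' f
  rw [← cycVerts_eq_of_cycEdges_eq hT.connected hT'.connected hcyc] at hinj
  have hcross := ncard_crossEdges_top_le hv hreach hinj
  rw [← cycleInterNum_add_ncard_cycEdges hT le_top (by simpa using he),
    ← cycleInterNum_add_ncard_cycEdges hT' le_top (by simpa using hf), hcyc] at hcross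
  exact Nat.le_of_add_le_add_right hcross

end CrossEdges

section PathWithStar

variable {V : Type*} {G : SimpleGraph V} {x y u v : V} {q : G.Walk x y}

/-- The edges of the walk `q` together with a star centered at `v` on the vertices not in `q`. For
a path `q` that closes up to a cycle this is the spanning tree built from that cycle. -/
def pathWithStar (q : G.Walk x y) (v : V) : SimpleGraph V :=
  fromEdgeSet ({f | f ∈ q.edges} ∪ {f | ∃ u, u ∉ q.support ∧ f = s(v, u)})

lemma edgeSet_pathWithStar (hv : v ∈ q.support) :
    (pathWithStar q v).edgeSet = {f | f ∈ q.edges} ∪ {f | ∃ u, u ∉ q.support ∧ f = s(v, u)} := by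
  rw [pathWithStar, edgeSet_fromEdgeSet, sdiff_eq_left, Set.disjoint_left]
  rintro f (hf | ⟨u, hu, rfl⟩) hdiag
  · exact G.not_isDiag_of_mem_edgeSet (q.edges_subset_edgeSet hf) hdiag
  · exact hu (Sym2.mk_isDiag_iff.1 hdiag ▸ hv)

lemma pathWithStar_adj_of_notMem_support (hv : v ∈ q.support) (hu : u ∉ q.support) :
    (pathWithStar q v).Adj v u := by
  rw [← mem_edgeSet, edgeSet_pathWithStar hv]
  exact Or.inr ⟨u, hu, rfl⟩

lemma mem_edgeSet_pathWithStar_of_mem_edges (hv : v ∈ q.support) {f : Sym2 V} (hf : f ∈ q.edges) :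
    f ∈ (pathWithStar q v).edgeSet := by
  rw [edgeSet_pathWithStar hv]
  exact Or.inl hf

lemma mk_notMem_edgeSet_pathWithStar (hv : v ∈ q.support) (hxy : s(x, y) ∉ q.edges) :
    s(x, y) ∉ (pathWithStar q v).edgeSet := by
  rw [edgeSet_pathWithStar hv]
  rintro (h | ⟨u, hu, h⟩)
  · exact hxy h
  · rcases Sym2.mem_iff.1 (h ▸ Sym2.mem_mk_right v u) with rfl | rfl
    · exact hu q.start_mem_support
    · exact hu q.end_mem_support

lemma connected_pathWithStar (hv : v ∈ q.support) : (pathWithStar q v).Connected := by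
  classical
  let p := q.transfer (pathWithStar q v) fun _ ↦ mem_edgeSet_pathWithStar_of_mem_edges hv
  have hp : p.support = q.support := q.support_transfer _
  refine connected_iff_exists_forall_reachable _ |>.2 ⟨v, fun w ↦ ?_⟩
  by_cases hw : w ∈ q.support
  · exact (p.takeUntil v (hp ▸ hv)).reachable.symm.trans (p.takeUntil w (hp ▸ hw)).reachable
  · exact (pathWithStar_adj_of_notMem_support hv hw).reachable

lemma ncard_edgeSet_pathWithStar_lt [Finite V] (hq : q.IsPath) (hv : v ∈ q.support) :
    (pathWithStar q v).edgeSet.ncard < Nat.card V := by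
  classical
  have hedges : {f | f ∈ q.edges}.ncard ≤ q.length := by
    rw [← List.coe_toFinset, Set.ncard_coe_finset, ← q.length_edges]
    exact q.edges.toFinset_card_le
  have hstar : {f | ∃ u, u ∉ q.support ∧ f = s(v, u)}.ncard ≤ {u | u ∈ q.support}ᶜ.ncard := by
    refine (Set.ncard_le_ncard ?_).trans (Set.ncard_image_le (f := fun u ↦ s(v, u)))
    rintro _ ⟨u, hu, rfl⟩
    exact ⟨u, hu, rfl⟩
  have hsupport : {u | u ∈ q.support}.ncard = q.length + 1 := by
    rw [← List.coe_toFinset, Set.ncard_coe_finset, List.toFinset_card_of_nodup hq.support_nodup,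
      q.length_support]
  have hcompl := Set.ncard_add_ncard_compl {u | u ∈ q.support}
  have hunion := Set.ncard_union_le {f | f ∈ q.edges} {f | ∃ u, u ∉ q.support ∧ f = s(v, u)}
  rw [edgeSet_pathWithStar hv]
  omega

lemma isTree_pathWithStar [Finite V] (hq : q.IsPath) (hv : v ∈ q.support) :
    (pathWithStar q v).IsTree := by
  have hconn := connected_pathWithStar hv
  exact isTree_iff_connected_and_card.2 ⟨hconn, le_antisymm
    (ncard_edgeSet_pathWithStar_lt hq hv) hconn.card_vert_le_card_edgeSet_add_one⟩

lemma cycEdges_pathWithStar [Finite V] (hq : q.IsPath) (hv : v ∈ q.support) :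
    cycEdges (pathWithStar q v) s(x, y) = insert s(x, y) {f | f ∈ q.edges} := by
  have hqT := fun f (hf : f ∈ q.edges) ↦ mem_edgeSet_pathWithStar_of_mem_edges hv hf
  rw [cycEdges_mk, pathEdges_eq_of_isAcyclic (isTree_pathWithStar hq hv).isAcyclic
    (hq.transfer hqT), q.edges_transfer hqT]

lemma mem_cycVerts_pathWithStar_iff [Finite V] (hq : q.IsPath) (hv : v ∈ q.support) :
    u ∈ cycVerts (pathWithStar q v) s(x, y) ↔ u ∈ q.support := by
  have hqT := fun f (hf : f ∈ q.edges) ↦ mem_edgeSet_pathWithStar_of_mem_edges hv hf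
  have hT := (isTree_pathWithStar hq hv).isAcyclic
  rw [mem_cycVerts_mk_iff, ← q.support_transfer hqT]
  refine ⟨fun ⟨r, hr, hu⟩ ↦ ?_, fun hu ↦ ⟨_, hq.transfer hqT, hu⟩⟩
  have hrq : r = q.transfer _ hqT := congrArg Subtype.val
    ((hT.subsingleton_path x y).elim ⟨r, hr⟩ ⟨_, hq.transfer hqT⟩)
  exact hrq ▸ hu

theorem cycleInterNum_pathWithStar_le [Finite V] (hq : q.IsPath) (hv : v ∈ q.support)
    (hxy : x ≠ y) {T : SimpleGraph V} (hT : T.IsTree) {f : Sym2 V} (hf : ¬ f.IsDiag)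
    (hcyc : cycEdges T f = insert s(x, y) {g | g ∈ q.edges}) :
    cycleInterNum ⊤ (pathWithStar q v) s(x, y) ≤ cycleInterNum ⊤ T f := by
  have hS := isTree_pathWithStar hq hv
  refine cycleInterNum_top_le_of_cycEdges_eq hS hT hxy hf
    ((cycEdges_pathWithStar hq hv).trans hcyc.symm)
    ((mem_cycVerts_pathWithStar_iff hq hv).2 hv) fun u hu ↦ ?_
  have hadj := pathWithStar_adj_of_notMem_support hv
    (mt (mem_cycVerts_pathWithStar_iff hq hv).2 hu)
  exact (deleteEdges_cycEdges_adj_of_notMem_cycVerts hS.connected hadj hu).reachable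

end PathWithStar

lemma exists_isPath_perm_of_mem_edges_isCycle {V : Type*} {G : SimpleGraph V} {a : V}
    {c : G.Walk a a} (hc : c.IsCycle) {e : Sym2 V} (he : e ∈ c.edges) :
    ∃ (x y : V) (q : G.Walk x y), q.IsPath ∧ e = s(x, y) ∧ c.edges.Perm (e :: q.edges) ∧
      ∀ w, w ∈ c.support ↔ w ∈ q.support := by
  obtain ⟨d, hd, rfl⟩ := List.mem_map.1 he
  obtain ⟨p, q, hpq⟩ := c.isSubwalk_toWalk_adj_iff_mem_darts.2 hd
  have hsplit : c = p.append (Walk.cons d.adj q) := by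
    rw [hpq, ← Walk.append_assoc]
    rfl
  have htail : c.support.tail.Perm (q.append p).support := by
    rw [hsplit, Walk.tail_support_append, Walk.support_cons, List.tail_cons, Walk.support_append]
    exact List.perm_append_comm
  refine ⟨d.snd, d.fst, q.append p, ?_, Sym2.eq_swap, ?_, fun w ↦ ?_⟩
  · exact Walk.IsPath.mk' (htail.nodup_iff.1 hc.support_nodup)
  · rw [hsplit, Walk.edges_append, Walk.edges_cons, Walk.edges_append]
    exact List.perm_middle.trans (List.perm_append_comm.cons _)
  · rw [← htail.mem_iff, Walk.mem_support_iff]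
    refine or_iff_right_of_imp ?_
    rintro rfl
    exact Walk.end_mem_tail_support hc.not_nil

/-- In the complete graph `K_n`, given a cycle `c`, remove one edge `e` of
`c`, choose a vertex `v` of `c`, and let `T` consist of the edges of `c - e` together
with a star centered at `v` on the vertices not in `c`. Then `T` is a spanning tree of
`G` having `c` as a tree-cycle (induced by the cycle-edge `e`), and
`∩_T(c) ≤ ∩_{T'}(c)` for every spanning tree `T'` of `G` having `c` as a tree-cycle. -/
theorem stmt_5 {V : Type*} [Fintype V] {a : V}
    (c : (⊤ : SimpleGraph V).Walk a a) (hc : c.IsCycle)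
    (e : Sym2 V) (he : e ∈ c.edges) (v : V) (hv : v ∈ c.support)
    (T : SimpleGraph V)
    (hTdef : T = SimpleGraph.fromEdgeSet
      (({f | f ∈ c.edges} \ {e}) ∪ {f | ∃ u, u ∉ c.support ∧ f = s(v, u)})) :
    T ≤ (⊤ : SimpleGraph V) ∧ T.IsTree ∧
    e ∈ (⊤ : SimpleGraph V).edgeSet \ T.edgeSet ∧
    cycEdges T e = {f | f ∈ c.edges} ∧
    ∀ T' : SimpleGraph V, T' ≤ (⊤ : SimpleGraph V) → T'.IsTree →
      ∀ f ∈ (⊤ : SimpleGraph V).edgeSet \ T'.edgeSet,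
        cycEdges T' f = {g | g ∈ c.edges} →
        cycleInterNum (⊤ : SimpleGraph V) T e ≤ cycleInterNum (⊤ : SimpleGraph V) T' f := by
  obtain ⟨x, y, q, hq, rfl, hperm, hsupp⟩ := exists_isPath_perm_of_mem_edges_isCycle hc he
  have hnodup : s(x, y) ∉ q.edges :=
    (List.nodup_cons.1 (hperm.nodup_iff.1 hc.isTrail.edges_nodup)).1
  have hedges : {f | f ∈ c.edges} = insert s(x, y) {f | f ∈ q.edges} := by
    ext f
    simp [hperm.mem_iff]
  have hT : T = pathWithStar q v := by
    simp only [hTdef, hedges, hsupp, pathWithStar,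
      Set.insert_sdiff_self_of_notMem (s := {f | f ∈ q.edges}) hnodup]
  subst hT
  have hvq : v ∈ q.support := (hsupp v).1 hv
  have hxy : s(x, y) ∈ (⊤ : SimpleGraph V).edgeSet := c.edges_subset_edgeSet he
  refine ⟨le_top, isTree_pathWithStar hq hvq, ⟨hxy, mk_notMem_edgeSet_pathWithStar hvq hnodup⟩,
    (cycEdges_pathWithStar hq hvq).trans hedges.symm, fun T' _ hT' f hf hcyc ↦ ?_⟩
  exact cycleInterNum_pathWithStar_le hq hvq (by simpa using hxy) hT' (by simpa using hf.1)
    (hcyc.trans hedges)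
end
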